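/- Weighted L² boundedness of low-frequency projections (Lemma 2.5, estimate (2.8)). Let D ≥ 1 and let R ≥ 16 be dyadic. There exists a constant C = C(D) such that for every measurable φ : ℝ → ℂ with ‖⟨x⟩^{-D} φ‖_{L¹(ℝ)} < ∞, one has ‖ √σ_R · P_{≤R} φ ‖_{L²(ℝ)} ≤ C ( ‖ √σ_R · φ ‖_{L²(ℝ)} + R^{-D} ‖⟨x⟩^{-D} φ‖_{L¹(ℝ)} ). -/

import Mathlib

open MeasureTheory Real Set ENNReal

noncomputable section

/-- The Japanese bracket `⟨x⟩ = √(1 + x²)`. -/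
def jap (x : ℝ) : ℝ := Real.sqrt (1 + x ^ 2)

/-- The inverse Fourier transform `ǧ(x) = (2π)^{-1/2} ∫ g(ξ) e^{i x ξ} dξ`. -/
def invFourier (g : ℝ → ℝ) (x : ℝ) : ℂ :=
  (Real.sqrt (2 * Real.pi) : ℂ)⁻¹ * ∫ ξ : ℝ, (g ξ : ℂ) * Complex.exp (Complex.I * ((x * ξ : ℝ) : ℂ))

/-- `ρ` is an admissible Littlewood–Paley bump function: smooth, `[0,1]`-valued, equal to `1`
on `[-1,1]` and vanishing outside of `[-9/8, 9/8]`. -/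
def IsLPBump (ρ : ℝ → ℝ) : Prop :=
  ContDiff ℝ (⊤ : ℕ∞) ρ ∧ (∀ ξ, ρ ξ ∈ Set.Icc (0 : ℝ) 1) ∧
    (∀ ξ ∈ Set.Icc (-1 : ℝ) 1, ρ ξ = 1) ∧
    ∀ ξ, ξ ∉ Set.Icc (-(9/8) : ℝ) (9/8) → ρ ξ = 0

/-- The symbol `ρ_{≤N}(ξ) = ρ(ξ/N)`. -/
def rhoLE (ρ : ℝ → ℝ) (N : ℝ) (ξ : ℝ) : ℝ := ρ (ξ / N)

open scoped Classical in
/-- The symbol `ρ_N`: `ρ_1 = ρ_{≤1}` and `ρ_N = ρ_{≤N} - ρ_{≤N/2}` for dyadic `N ≥ 2`. -/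
def rhoD (ρ : ℝ → ℝ) (N : ℝ) (ξ : ℝ) : ℝ :=
  if N = 1 then ρ ξ else ρ (ξ / N) - ρ (2 * ξ / N)

/-- The Littlewood–Paley projection `P_{≤N} φ = ρ̌_{≤N} ∗ φ`. -/
def PLE (ρ : ℝ → ℝ) (N : ℝ) (φ : ℝ → ℂ) (x : ℝ) : ℂ :=
  ∫ y : ℝ, invFourier (rhoLE ρ N) y * φ (x - y)

/-- The Littlewood–Paley projection `P_N φ = ρ̌_N ∗ φ`. -/
def PD (ρ : ℝ → ℝ) (N : ℝ) (φ : ℝ → ℂ) (x : ℝ) : ℂ :=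
  ∫ y : ℝ, invFourier (rhoD ρ N) y * φ (x - y)

/-- The weighted norm `‖⟨x⟩^{-D} φ‖_{L¹(ℝ)}`. -/
def wL1 (D : ℝ) (φ : ℝ → ℂ) : ℝ := ∫ x : ℝ, jap x ^ (-D) * ‖φ x‖

/-- The weight `σ_R(x) = exp(-⟨x/R⟩)`. -/
def sigmaW (R x : ℝ) : ℝ := Real.exp (-jap (x / R))

/-- The weighted `L²`-norm `‖√σ_R · f‖_{L²(ℝ)}`. -/
def wSigmaL2 (R : ℝ) (f : ℝ → ℂ) : ℝ≥0∞ :=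
  eLpNorm (fun x => (Real.sqrt (sigmaW R x) : ℂ) * f x) 2 volume

open scoped FourierTransform SchwartzMap

lemma one_le_jap (x : ℝ) : 1 ≤ jap x := by
  rw [jap, Real.one_le_sqrt]
  nlinarith [sq_nonneg x]

lemma jap_pos (x : ℝ) : 0 < jap x := zero_lt_one.trans_le (one_le_jap x)

lemma jap_sq (x : ℝ) : jap x ^ 2 = 1 + x ^ 2 := Real.sq_sqrt (by positivity)

lemma abs_le_jap (x : ℝ) : |x| ≤ jap x := by
  apply Real.abs_le_sqrt
  linarith

@[fun_prop]
lemma continuous_jap : Continuous jap := by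
  unfold jap
  fun_prop

/-- The Japanese bracket is `1`-Lipschitz. -/
lemma jap_le_jap_add_abs_sub (a b : ℝ) : jap a ≤ jap b + |a - b| := by
  refine Real.sqrt_le_iff.2 ⟨by have := jap_pos b; positivity, ?_⟩
  have h : b * (a - b) ≤ jap b * |a - b| := by
    calc b * (a - b) ≤ |b| * |a - b| := by rw [← abs_mul]; exact le_abs_self _
      _ ≤ jap b * |a - b| := by gcongr; exact abs_le_jap b
  nlinarith [jap_sq b, sq_abs (a - b)]

/-- Peetre's inequality for the Japanese bracket. -/
lemma jap_sub_le (x y : ℝ) : jap (x - y) ≤ 2 * jap x * jap y := by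
  have h := jap_le_jap_add_abs_sub (x - y) x
  have e : |x - y - x| = |y| := by rw [show x - y - x = -y by ring, abs_neg]
  rw [e] at h
  nlinarith [abs_le_jap y, one_le_jap x, one_le_jap y,
    mul_nonneg (sub_nonneg.2 (one_le_jap x)) (sub_nonneg.2 (one_le_jap y))]

lemma jap_le_two_mul_abs {y : ℝ} (hy : 1 ≤ |y|) : jap y ≤ 2 * |y| := by
  have h := jap_le_jap_add_abs_sub y 0
  have : jap 0 = 1 := by simp [jap]
  rw [sub_zero, this] at h
  linarith

lemma jap_le_mul_jap_div {R : ℝ} (hR : 1 ≤ R) (x : ℝ) : jap x ≤ R * jap (x / R) := by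
  have hR0 : 0 < R := by linarith
  refine Real.sqrt_le_iff.2 ⟨by have := jap_pos (x / R); positivity, ?_⟩
  rw [mul_pow, jap_sq, mul_add, ← mul_pow, mul_div_cancel₀ _ hR0.ne']
  nlinarith

lemma sqrt_sigmaW (R x : ℝ) : √(sigmaW R x) = Real.exp (-(jap (x / R) / 2)) := by
  rw [sigmaW, ← Real.exp_half, neg_div]

@[fun_prop]
lemma continuous_sigmaW (R : ℝ) : Continuous (sigmaW R) := by
  unfold sigmaW
  fun_prop

/-- The weight `√σ_R` is slowly varying at scale `R`. -/
lemma sqrt_sigmaW_le_of_abs_le {R : ℝ} (hR : 0 < R) {x y : ℝ} (hy : |y| ≤ R) :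
    √(sigmaW R x) ≤ Real.exp (1 / 2) * √(sigmaW R (x - y)) := by
  rw [sqrt_sigmaW, sqrt_sigmaW, ← Real.exp_add, Real.exp_le_exp]
  have h := jap_le_jap_add_abs_sub ((x - y) / R) (x / R)
  have e : |(x - y) / R - x / R| ≤ 1 := by
    rw [← sub_div, show x - y - x = -y by ring, abs_div, abs_neg, abs_of_pos hR]
    exact (div_le_one hR).2 hy
  linarith

lemma rpow_le_mul_exp_half {s t : ℝ} (hs : 0 < s) (ht : 0 ≤ t) :
    t ^ s ≤ (2 * s) ^ s * Real.exp (t / 2) := by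
  have h : t ≤ 2 * s * Real.exp (t / (2 * s)) := by
    have := Real.add_one_le_exp (t / (2 * s))
    rw [← div_le_iff₀' (by positivity)]
    linarith
  calc t ^ s ≤ (2 * s * Real.exp (t / (2 * s))) ^ s := by gcongr
    _ = (2 * s) ^ s * Real.exp (t / 2) := by
      rw [Real.mul_rpow (by positivity) (by positivity), ← Real.exp_mul]
      congr 2
      field_simp

/-- Polynomial decay of the weight `√σ_R`. -/
lemma sqrt_sigmaW_le_rpow {R s : ℝ} (hR : 1 ≤ R) (hs : 0 < s) (x : ℝ) :
    √(sigmaW R x) ≤ (2 * s) ^ s * (R ^ s * jap x ^ (-s)) := by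
  have hx := jap_pos x
  have hR0 : 0 < R := by linarith
  have h := rpow_le_mul_exp_half hs (jap_pos (x / R)).le
  have h' : jap x ^ s ≤ R ^ s * ((2 * s) ^ s * Real.exp (jap (x / R) / 2)) := by
    calc jap x ^ s ≤ (R * jap (x / R)) ^ s := by gcongr; exact jap_le_mul_jap_div hR x
      _ = R ^ s * jap (x / R) ^ s := Real.mul_rpow hR0.le (jap_pos _).le
      _ ≤ _ := by gcongr
  rw [sqrt_sigmaW, Real.exp_neg, Real.rpow_neg hx.le, ← mul_assoc, ← div_eq_mul_inv,
    le_div_iff₀ (by positivity), inv_mul_le_iff₀ (Real.exp_pos _)]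
  linarith

/-- The kernel of `P_{≤R}` is an `L¹`-normalised dilate of a fixed Schwartz function. -/
lemma IsLPBump.exists_schwartz_kernel {ρ : ℝ → ℝ} (hρ : IsLPBump ρ) :
    ∃ F : 𝓢(ℝ, ℂ), ∀ R : ℝ, 0 < R → ∀ y : ℝ,
      invFourier (rhoLE ρ R) y = R * F (R / (2 * π) * y) := by
  have hsupp : HasCompactSupport (fun ξ => (ρ ξ : ℂ)) :=
    HasCompactSupport.intro (isCompact_Icc (a := (-(9/8) : ℝ)) (b := 9/8)) fun ξ hξ => by
      simp [hρ.2.2.2 ξ hξ]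
  have hsmooth : ContDiff ℝ (⊤ : ℕ∞) (fun ξ => (ρ ξ : ℂ)) :=
    Complex.ofRealCLM.contDiff.comp hρ.1
  refine ⟨((√(2 * π) : ℂ)⁻¹) • 𝓕⁻ (hsupp.toSchwartzMap hsmooth), fun R hR y => ?_⟩
  have hcoe : ((hsupp.toSchwartzMap hsmooth : 𝓢(ℝ, ℂ)) : ℝ → ℂ) = fun ξ => (ρ ξ : ℂ) := rfl
  rw [smul_apply, SchwartzMap.fourierInv_coe, hcoe, Real.fourierInv_eq']
  have h := Measure.integral_comp_div
    (fun ξ : ℝ => (ρ ξ : ℂ) * Complex.exp (Complex.I * ((y * (R * ξ) : ℝ) : ℂ))) R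
  have e : ∀ ξ : ℝ, R * (ξ / R) = ξ := fun ξ => by field_simp
  simp only [e, abs_of_pos hR] at h
  simp only [invFourier, rhoLE]
  rw [h, smul_eq_mul, Complex.real_smul, mul_left_comm]
  congr 2
  refine integral_congr_ae (.of_forall fun ξ => ?_)
  simp only [smul_eq_mul]
  rw [mul_comm]
  congr 2
  rw [mul_comm]
  congr 2
  simp
  field_simp

/-- Young's inequality `L¹ ∗ L² ⊆ L²` for nonnegative functions. -/
lemma eLpNorm_lintegral_mul_sub_le {k g : ℝ → ℝ≥0∞} (hk : Measurable k) (hg : Measurable g) :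
    eLpNorm (fun x => ∫⁻ y, k y * g (x - y)) 2 volume ≤
      (∫⁻ y, k y) * eLpNorm g 2 volume := by
  have cs : ∀ x, (∫⁻ y, k y * g (x - y)) ^ (2 : ℝ) ≤
      (∫⁻ y, k y) * ∫⁻ y, k y * g (x - y) ^ (2 : ℝ) := fun x => by
    have h := ENNReal.lintegral_mul_le_Lp_mul_Lq volume Real.HolderConjugate.two_two
      (f := fun y => k y ^ (1 / 2 : ℝ)) (g := fun y => k y ^ (1 / 2 : ℝ) * g (x - y))
      (by fun_prop) (by fun_prop)
    have e1 : ∀ a : ℝ≥0∞, (a ^ (1 / 2 : ℝ)) ^ (2 : ℝ) = a := fun a => by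
      rw [← ENNReal.rpow_mul]; norm_num
    have e2 : ∀ a : ℝ≥0∞, a ^ (1 / 2 : ℝ) * a ^ (1 / 2 : ℝ) = a := fun a => by
      rw [← ENNReal.rpow_add_of_nonneg _ _ (by norm_num) (by norm_num)]; norm_num
    simp only [Pi.mul_apply, ← mul_assoc, e2, ENNReal.mul_rpow_of_nonneg _ _ zero_le_two, e1] at h
    calc _ ≤ _ := ENNReal.rpow_le_rpow h zero_le_two
      _ = _ := by rw [ENNReal.mul_rpow_of_nonneg _ _ zero_le_two, e1, e1]
  simp only [eLpNorm_eq_lintegral_rpow_enorm_toReal two_ne_zero ENNReal.ofNat_ne_top, enorm_eq_self,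
    ENNReal.toReal_ofNat]
  have key : ∫⁻ x, (∫⁻ y, k y * g (x - y)) ^ (2 : ℝ) ≤
      (∫⁻ y, k y) ^ (2 : ℝ) * ∫⁻ x, g x ^ (2 : ℝ) := by
    calc _ ≤ ∫⁻ x, (∫⁻ y, k y) * ∫⁻ y, k y * g (x - y) ^ (2 : ℝ) := lintegral_mono cs
      _ = (∫⁻ y, k y) * ∫⁻ x, ∫⁻ y, k y * g (x - y) ^ (2 : ℝ) := by
        rw [lintegral_const_mul]
        exact Measurable.lintegral_prod_right (by fun_prop)
      _ = (∫⁻ y, k y) * ∫⁻ y, ∫⁻ x, k y * g (x - y) ^ (2 : ℝ) := by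
        rw [lintegral_lintegral_swap]
        fun_prop
      _ = (∫⁻ y, k y) * ∫⁻ y, k y * ∫⁻ x, g x ^ (2 : ℝ) := by
        congr 1
        refine lintegral_congr fun y => ?_
        rw [lintegral_const_mul _ (by fun_prop),
          lintegral_sub_right_eq_self (fun x => g x ^ (2 : ℝ)) y]
      _ = _ := by
        rw [lintegral_mul_const _ hk, ← mul_assoc]
        congr 1
        rw [ENNReal.rpow_two, sq]
  calc _ ≤ _ := ENNReal.rpow_le_rpow key (by norm_num)
    _ = _ := by
      rw [ENNReal.mul_rpow_of_nonneg _ _ (by norm_num), ← ENNReal.rpow_mul]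
      norm_num

lemma memLp_jap_inv : MemLp (fun x => (jap x)⁻¹) 2 volume := by
  have hc : Continuous fun x => (jap x)⁻¹ := continuous_jap.inv₀ fun x => (jap_pos x).ne'
  rw [memLp_two_iff_integrable_sq hc.aestronglyMeasurable]
  simpa only [inv_pow, jap_sq] using integrable_inv_one_add_sq

/-- Off-diagonal decay of the weighted kernel of `P_{≤R}`. -/
lemma exists_sqrt_sigmaW_mul_kernel_le {ρ : ℝ → ℝ} (hρ : IsLPBump ρ) {D : ℝ} (hD : 0 ≤ D) :
    ∃ A : ℝ, 0 ≤ A ∧ ∀ R : ℝ, 1 ≤ R → ∀ x y : ℝ, R < |y| →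
      √(sigmaW R x) * ‖invFourier (rhoLE ρ R) y‖ ≤
        A * R ^ (-D) * (jap x)⁻¹ * jap (x - y) ^ (-D) := by
  obtain ⟨F, hF⟩ := hρ.exists_schwartz_kernel
  obtain ⟨M, hM⟩ := exists_nat_ge (2 * D + 2)
  obtain ⟨B, hB0, hB⟩ := F.decay M 0
  refine ⟨(2 * (D + 1)) ^ (D + 1) * (4 ^ D * (B * (2 * π) ^ M)), by positivity,
    fun R hR x y hy => ?_⟩
  have hR0 : 0 < R := by linarith
  have hy1 : 1 ≤ |y| := by linarith
  have hy0 : 0 < |y| := by linarith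
  have hx := jap_pos x
  have hxy := jap_pos (x - y)
  have hK : ‖invFourier (rhoLE ρ R) y‖ ≤ B * (2 * π) ^ M * (R * (R * |y|) ^ (-(M : ℝ))) := by
    have h := hB (R / (2 * π) * y)
    rw [norm_iteratedFDeriv_zero, norm_mul, Real.norm_eq_abs, Real.norm_eq_abs,
      abs_of_pos (by positivity : 0 < R / (2 * π)), div_mul_eq_mul_div, div_pow,
      div_mul_eq_mul_div, div_le_iff₀ (by positivity)] at h
    rw [hF R hR0, norm_mul, Complex.norm_real, Real.norm_eq_abs, abs_of_pos hR0,
      Real.rpow_neg (by positivity), Real.rpow_natCast, mul_left_comm]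
    gcongr
    rwa [← div_eq_mul_inv, le_div_iff₀' (by positivity)]
  have hS := sqrt_sigmaW_le_rpow hR (by linarith : 0 < D + 1) x
  have hP : 1 ≤ 4 ^ D * (jap x ^ D * |y| ^ D) * jap (x - y) ^ (-D) := by
    rw [Real.rpow_neg hxy.le, ← div_eq_mul_inv, one_le_div (by positivity),
      ← Real.mul_rpow hx.le hy0.le, ← Real.mul_rpow (by positivity) (by positivity)]
    gcongr
    calc _ ≤ _ := jap_sub_le x y
      _ ≤ 2 * jap x * (2 * |y|) := by gcongr; exact jap_le_two_mul_abs hy1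
      _ = _ := by ring
  have hpow : R ^ (D + 1) * R * R ^ (-(M : ℝ)) ≤ R ^ (-D) := by
    nth_rewrite 2 [← Real.rpow_one R]
    rw [← Real.rpow_add hR0, ← Real.rpow_add hR0]
    exact Real.rpow_le_rpow_of_exponent_le hR (by linarith)
  have hypow : |y| ^ D * |y| ^ (-(M : ℝ)) ≤ 1 := by
    rw [← Real.rpow_add hy0]
    exact Real.rpow_le_one_of_one_le_of_nonpos hy1 (by linarith)
  have hxpow : jap x ^ (-(D + 1)) * jap x ^ D = (jap x)⁻¹ := by
    rw [← Real.rpow_add hx, ← Real.rpow_neg_one]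
    congr 1
    ring
  calc √(sigmaW R x) * ‖invFourier (rhoLE ρ R) y‖
      ≤ ((2 * (D + 1)) ^ (D + 1) * (R ^ (D + 1) * jap x ^ (-(D + 1)))) *
          (B * (2 * π) ^ M * (R * (R * |y|) ^ (-(M : ℝ)))) *
          (4 ^ D * (jap x ^ D * |y| ^ D) * jap (x - y) ^ (-D)) :=
        (mul_le_mul hS hK (norm_nonneg _) (by positivity)).trans
          (le_mul_of_one_le_right (by positivity) hP)
    _ = (2 * (D + 1)) ^ (D + 1) * (4 ^ D * (B * (2 * π) ^ M)) *
          (R ^ (D + 1) * R * R ^ (-(M : ℝ))) * (jap x ^ (-(D + 1)) * jap x ^ D) *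
          jap (x - y) ^ (-D) * (|y| ^ D * |y| ^ (-(M : ℝ))) := by
      rw [Real.mul_rpow hR0.le hy0.le]
      ring
    _ ≤ (2 * (D + 1)) ^ (D + 1) * (4 ^ D * (B * (2 * π) ^ M)) *
          R ^ (-D) * (jap x)⁻¹ * jap (x - y) ^ (-D) * 1 := by
      rw [hxpow]
      gcongr
    _ = _ := mul_one _

/-- The kernels of `P_{≤R}` are continuous and bounded in `L¹` uniformly in `R`. -/
lemma IsLPBump.exists_lintegral_kernel_le {ρ : ℝ → ℝ} (hρ : IsLPBump ρ) :
    ∃ L : ℝ, 0 ≤ L ∧ ∀ R : ℝ, 0 < R → Continuous (invFourier (rhoLE ρ R)) ∧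
      ∫⁻ y, ‖invFourier (rhoLE ρ R) y‖ₑ ≤ ENNReal.ofReal L := by
  obtain ⟨F, hF⟩ := hρ.exists_schwartz_kernel
  refine ⟨2 * π * ∫ y, ‖F y‖, by positivity, fun R hR => ?_⟩
  have hK : invFourier (rhoLE ρ R) = fun y => R * F (R / (2 * π) * y) := funext (hF R hR)
  have hc : 0 < R / (2 * π) := by positivity
  have hint : Integrable fun y => (R : ℂ) * F (R / (2 * π) * y) :=
    (F.integrable.comp_mul_left' hc.ne').const_mul _
  refine ⟨hK ▸ by fun_prop, ?_⟩
  rw [hK, ← ofReal_integral_norm_eq_lintegral_enorm hint]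
  refine ENNReal.ofReal_le_ofReal (le_of_eq ?_)
  simp only [norm_mul, Complex.norm_real, Real.norm_eq_abs, abs_of_pos hR]
  rw [integral_const_mul, Measure.integral_comp_mul_left (fun y => ‖F y‖), abs_of_pos (by positivity),
    smul_eq_mul]
  field_simp

/-- **Weighted `L²` boundedness of low-frequency projections** (Lemma 2.5, estimate (2.8)). -/
theorem PLE_weighted_L2 (ρ : ℝ → ℝ) (hρ : IsLPBump ρ) (D : ℝ) (hD : 1 ≤ D) :
    ∃ C : ℝ, 0 < C ∧
      ∀ R : ℝ, 16 ≤ R → (∃ k : ℕ, R = 2 ^ k) →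
        ∀ φ : ℝ → ℂ, Measurable φ → Integrable (fun x => jap x ^ (-D) * ‖φ x‖) →
          wSigmaL2 R (PLE ρ R φ) ≤
            ENNReal.ofReal C *
              (wSigmaL2 R φ + ENNReal.ofReal (R ^ (-D)) * ENNReal.ofReal (wL1 D φ)) := by
  obtain ⟨A, hA0, hA⟩ := exists_sqrt_sigmaW_mul_kernel_le hρ (by linarith : 0 ≤ D)
  obtain ⟨L, hL0, hL⟩ := hρ.exists_lintegral_kernel_le
  obtain ⟨J, hJ⟩ : ∃ J, J = (eLpNorm (fun x => (jap x)⁻¹) 2 volume).toReal := ⟨_, rfl⟩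
  have hJ0 : 0 ≤ J := hJ ▸ ENNReal.toReal_nonneg
  have hJe : eLpNorm (fun x => (jap x)⁻¹) 2 volume = ENNReal.ofReal J := by
    rw [hJ, ENNReal.ofReal_toReal memLp_jap_inv.eLpNorm_ne_top]
  refine ⟨Real.exp (1 / 2) * L + A * J + 1, by positivity, fun R hR16 _ φ hφ hint => ?_⟩
  have hR : 0 < R := by linarith
  obtain ⟨hKc, hKL⟩ := hL R hR
  have hKm := hKc.measurable
  set K := invFourier (rhoLE ρ R)
  set g : ℝ → ℝ≥0∞ := fun x => ‖(√(sigmaW R x) : ℂ) * φ x‖ₑ with hg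
  have hgm : Measurable g :=
    ((by fun_prop : Continuous fun x => (√(sigmaW R x) : ℂ)).measurable.mul hφ).enorm
  have hgnorm : eLpNorm g 2 volume = wSigmaL2 R φ := eLpNorm_enorm _
  set w : ℝ → ℝ≥0∞ := fun x => ENNReal.ofReal (jap x ^ (-D) * ‖φ x‖) with hw
  have hwint : ∫⁻ x, w x = ENNReal.ofReal (wL1 D φ) :=
    (ofReal_integral_eq_lintegral_ofReal hint (.of_forall fun x =>
      mul_nonneg (Real.rpow_nonneg (jap_pos x).le _) (norm_nonneg _))).symm
  set k : ℝ → ℝ≥0∞ := fun y => ENNReal.ofReal (Real.exp (1 / 2)) * ‖K y‖ₑ with hk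
  have hkm : Measurable k := by fun_prop
  set a : ℝ → ℝ := fun x => A * R ^ (-D) * (jap x)⁻¹ with ha
  have ha0 : ∀ x, 0 ≤ a x := fun x => by have := jap_pos x; positivity
  have ham : Measurable a := by fun_prop
  have hpt : ∀ x y, ENNReal.ofReal √(sigmaW R x) * ‖K y * φ (x - y)‖ₑ ≤
      k y * g (x - y) + ENNReal.ofReal (a x) * w (x - y) := fun x y => by
    simp only [hk, hg, hw, ← ofReal_norm, norm_mul, Complex.norm_real, Real.norm_eq_abs,
      abs_of_nonneg (Real.sqrt_nonneg _)]
    rw [← ENNReal.ofReal_mul (by positivity), ← ENNReal.ofReal_mul (by positivity),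
      ← ENNReal.ofReal_mul (by positivity), ← ENNReal.ofReal_mul (ha0 x)]
    rcases le_or_gt |y| R with hy | hy
    · refine le_add_right (ENNReal.ofReal_le_ofReal ?_)
      calc √(sigmaW R x) * (‖K y‖ * ‖φ (x - y)‖)
          ≤ Real.exp (1 / 2) * √(sigmaW R (x - y)) * (‖K y‖ * ‖φ (x - y)‖) := by
            gcongr; exact sqrt_sigmaW_le_of_abs_le hR hy
        _ = _ := by ring
    · refine le_add_left (ENNReal.ofReal_le_ofReal ?_)
      rw [← mul_assoc, ← mul_assoc]
      exact mul_le_mul_of_nonneg_right (hA R (by linarith) x y hy) (norm_nonneg _)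
  have hwm : Measurable w := by fun_prop
  calc wSigmaL2 R (PLE ρ R φ)
      ≤ eLpNorm ((fun x => ∫⁻ y, k y * g (x - y)) +
          fun x => ENNReal.ofReal (a x * wL1 D φ)) 2 volume := by
        refine eLpNorm_mono_enorm fun x => ?_
        rw [enorm_eq_self, enorm_mul, ← ofReal_norm, Complex.norm_real, Real.norm_eq_abs,
          abs_of_nonneg (Real.sqrt_nonneg _), Pi.add_apply, ENNReal.ofReal_mul (ha0 x), ← hwint,
          ← lintegral_sub_left_eq_self w x, ← lintegral_const_mul _ (by fun_prop),
          ← lintegral_add_left (by fun_prop)]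
        calc _ ≤ ENNReal.ofReal √(sigmaW R x) * ∫⁻ y, ‖K y * φ (x - y)‖ₑ := by
              gcongr; exact enorm_integral_le_lintegral_enorm _
          _ = ∫⁻ y, ENNReal.ofReal √(sigmaW R x) * ‖K y * φ (x - y)‖ₑ :=
              (lintegral_const_mul _ (by fun_prop)).symm
          _ ≤ _ := lintegral_mono (hpt x)
    _ ≤ eLpNorm (fun x => ∫⁻ y, k y * g (x - y)) 2 volume +
          eLpNorm (fun x => ENNReal.ofReal (a x * wL1 D φ)) 2 volume :=
        eLpNorm_add_le
          (Measurable.lintegral_prod_right (by fun_prop)).aestronglyMeasurable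
          (ham.mul_const _).ennreal_ofReal.aestronglyMeasurable one_le_two
    _ ≤ ENNReal.ofReal (Real.exp (1 / 2) * L) * wSigmaL2 R φ +
          ENNReal.ofReal (A * J) * (ENNReal.ofReal (R ^ (-D)) * ENNReal.ofReal (wL1 D φ)) := by
        gcongr
        · refine (eLpNorm_lintegral_mul_sub_le hkm hgm).trans ?_
          rw [hgnorm, lintegral_const_mul _ (by fun_prop), ENNReal.ofReal_mul (by positivity)]
          gcongr
        · have hW : 0 ≤ wL1 D φ := integral_nonneg fun x =>
            mul_nonneg (Real.rpow_nonneg (jap_pos x).le _) (norm_nonneg _)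
          have hle : eLpNorm (fun x => ENNReal.ofReal (a x * wL1 D φ)) 2 volume ≤
              eLpNorm ((A * R ^ (-D) * wL1 D φ) • fun x => (jap x)⁻¹) 2 volume :=
            eLpNorm_mono_enorm fun x => by
              rw [enorm_eq_self, Real.enorm_eq_ofReal_abs]
              refine ENNReal.ofReal_le_ofReal (le_trans (le_of_eq ?_) (le_abs_self _))
              simp only [ha, Pi.smul_apply, smul_eq_mul]
              ring
          refine hle.trans (le_of_eq ?_)
          rw [eLpNorm_const_smul, hJe, Real.enorm_eq_ofReal (by positivity),
            ← ENNReal.ofReal_mul (by positivity), ← ENNReal.ofReal_mul (by positivity),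
            ← ENNReal.ofReal_mul (by positivity)]
          congr 1
          ring
    _ ≤ _ := by
        rw [mul_add]
        gcongr
        · nlinarith [mul_nonneg hA0 hJ0]
        · nlinarith [mul_nonneg (Real.exp_pos (1 / 2)).le hL0]
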